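/- As a left module over itself, D decomposes as D ≅ ⨁_{ℓ ∈ Z/4} P(ℓ) ⊕ ⨁_{(i,j) ∈ Λ} (V_{i,j} ⊕ V_{i,j}); in particular D has k-dimension 64. -/

import Mathlib

open scoped TensorProduct

/-- Generators of the Drinfeld double `D = D(K^cop)`. -/
inductive DGen : Type
  | a | b | c | d | x | g

open FreeAlgebra in
/-- The defining relations of the algebra `D = D(K^cop)`. -/
inductive DRel (𝕜 : Type) [Field 𝕜] (ξ ν : 𝕜) :
    FreeAlgebra 𝕜 DGen → FreeAlgebra 𝕜 DGen → Prop
  | ab : DRel 𝕜 ξ ν (ι 𝕜 DGen.a * ι 𝕜 DGen.b) (ξ • (ι 𝕜 DGen.b * ι 𝕜 DGen.a))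
  | ac : DRel 𝕜 ξ ν (ι 𝕜 DGen.a * ι 𝕜 DGen.c) (ξ • (ι 𝕜 DGen.c * ι 𝕜 DGen.a))
  | cb : DRel 𝕜 ξ ν (ι 𝕜 DGen.c * ι 𝕜 DGen.b) 0
  | bc : DRel 𝕜 ξ ν (ι 𝕜 DGen.b * ι 𝕜 DGen.c) 0
  | cd : DRel 𝕜 ξ ν (ι 𝕜 DGen.c * ι 𝕜 DGen.d) (ξ • (ι 𝕜 DGen.d * ι 𝕜 DGen.c))
  | bd : DRel 𝕜 ξ ν (ι 𝕜 DGen.b * ι 𝕜 DGen.d) (ξ • (ι 𝕜 DGen.d * ι 𝕜 DGen.b))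
  | adcomm : DRel 𝕜 ξ ν (ι 𝕜 DGen.a * ι 𝕜 DGen.d) (ι 𝕜 DGen.d * ι 𝕜 DGen.a)
  | adone : DRel 𝕜 ξ ν (ι 𝕜 DGen.a * ι 𝕜 DGen.d) 1
  | bsq : DRel 𝕜 ξ ν (ι 𝕜 DGen.b * ι 𝕜 DGen.b) 0
  | csq : DRel 𝕜 ξ ν (ι 𝕜 DGen.c * ι 𝕜 DGen.c) 0
  | aac : DRel 𝕜 ξ ν (ι 𝕜 DGen.a * ι 𝕜 DGen.a * ι 𝕜 DGen.c) (ι 𝕜 DGen.b)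
  | afour : DRel 𝕜 ξ ν (ι 𝕜 DGen.a ^ 4) 1
  | gfour : DRel 𝕜 ξ ν (ι 𝕜 DGen.g ^ 4) 1
  | xsq : DRel 𝕜 ξ ν (ι 𝕜 DGen.x * ι 𝕜 DGen.x) (ι 𝕜 DGen.g * ι 𝕜 DGen.g - 1)
  | gx : DRel 𝕜 ξ ν (ι 𝕜 DGen.g * ι 𝕜 DGen.x) (-(ι 𝕜 DGen.x * ι 𝕜 DGen.g))
  | ag : DRel 𝕜 ξ ν (ι 𝕜 DGen.a * ι 𝕜 DGen.g) (ι 𝕜 DGen.g * ι 𝕜 DGen.a)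
  | bg : DRel 𝕜 ξ ν (ι 𝕜 DGen.b * ι 𝕜 DGen.g) (-(ι 𝕜 DGen.g * ι 𝕜 DGen.b))
  | cg : DRel 𝕜 ξ ν (ι 𝕜 DGen.c * ι 𝕜 DGen.g) (-(ι 𝕜 DGen.g * ι 𝕜 DGen.c))
  | dg : DRel 𝕜 ξ ν (ι 𝕜 DGen.d * ι 𝕜 DGen.g) (ι 𝕜 DGen.g * ι 𝕜 DGen.d)
  | axr : DRel 𝕜 ξ ν (ι 𝕜 DGen.a * ι 𝕜 DGen.x)
      ((ν * ξ) • (ι 𝕜 DGen.b + ι 𝕜 DGen.g * ι 𝕜 DGen.c) - ξ • (ι 𝕜 DGen.x * ι 𝕜 DGen.a))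
  | bxr : DRel 𝕜 ξ ν (ι 𝕜 DGen.b * ι 𝕜 DGen.x)
      ((ν * ξ) • (ι 𝕜 DGen.a - ι 𝕜 DGen.g * ι 𝕜 DGen.d) + ξ • (ι 𝕜 DGen.x * ι 𝕜 DGen.b))
  | cxr : DRel 𝕜 ξ ν (ι 𝕜 DGen.c * ι 𝕜 DGen.x)
      ((ν * ξ) • (ι 𝕜 DGen.d - ι 𝕜 DGen.g * ι 𝕜 DGen.a) - ξ • (ι 𝕜 DGen.x * ι 𝕜 DGen.c))
  | dxr : DRel 𝕜 ξ ν (ι 𝕜 DGen.d * ι 𝕜 DGen.x)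
      ((ν * ξ) • (ι 𝕜 DGen.c + ι 𝕜 DGen.g * ι 𝕜 DGen.b) + ξ • (ι 𝕜 DGen.x * ι 𝕜 DGen.d))

/-- The Drinfeld double `D = D(K^cop)`, presented by generators and relations. -/
abbrev DAlg (𝕜 : Type) [Field 𝕜] (ξ ν : 𝕜) : Type := RingQuot (DRel 𝕜 ξ ν)

variable (𝕜 : Type) [Field 𝕜] (ξ ν : 𝕜)

/-- The generator `a` of `D`. -/
noncomputable def gA : DAlg 𝕜 ξ ν := RingQuot.mkAlgHom 𝕜 (DRel 𝕜 ξ ν) (FreeAlgebra.ι 𝕜 DGen.a)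
/-- The generator `b` of `D`. -/
noncomputable def gB : DAlg 𝕜 ξ ν := RingQuot.mkAlgHom 𝕜 (DRel 𝕜 ξ ν) (FreeAlgebra.ι 𝕜 DGen.b)
/-- The generator `c` of `D`. -/
noncomputable def gC : DAlg 𝕜 ξ ν := RingQuot.mkAlgHom 𝕜 (DRel 𝕜 ξ ν) (FreeAlgebra.ι 𝕜 DGen.c)
/-- The generator `d` of `D`. -/
noncomputable def gD : DAlg 𝕜 ξ ν := RingQuot.mkAlgHom 𝕜 (DRel 𝕜 ξ ν) (FreeAlgebra.ι 𝕜 DGen.d)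
/-- The generator `x` of `D`. -/
noncomputable def gX : DAlg 𝕜 ξ ν := RingQuot.mkAlgHom 𝕜 (DRel 𝕜 ξ ν) (FreeAlgebra.ι 𝕜 DGen.x)
/-- The generator `g` of `D`. -/
noncomputable def gG : DAlg 𝕜 ξ ν := RingQuot.mkAlgHom 𝕜 (DRel 𝕜 ξ ν) (FreeAlgebra.ι 𝕜 DGen.g)

variable {𝕜 ξ ν}
variable {V W : Type} [AddCommGroup V] [Module 𝕜 V] [AddCommGroup W] [Module 𝕜 W]

/-- A `𝕜`-subspace is invariant under a representation of `D`. -/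
def DInvariant (ρ : DAlg 𝕜 ξ ν →ₐ[𝕜] Module.End 𝕜 V) (U : Submodule 𝕜 V) : Prop :=
  ∀ z : DAlg 𝕜 ξ ν, ∀ w ∈ U, ρ z w ∈ U

/-- A representation of `D` is simple (the corresponding `D`-module is simple). -/
def DSimpleRep (ρ : DAlg 𝕜 ξ ν →ₐ[𝕜] Module.End 𝕜 V) : Prop :=
  Nontrivial V ∧ ∀ U : Submodule 𝕜 V, DInvariant ρ U → U = ⊥ ∨ U = ⊤

/-- A representation of `D` is indecomposable. -/
def DIndecRep (ρ : DAlg 𝕜 ξ ν →ₐ[𝕜] Module.End 𝕜 V) : Prop :=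
  Nontrivial V ∧ ∀ U₁ U₂ : Submodule 𝕜 V, DInvariant ρ U₁ → DInvariant ρ U₂ →
    IsCompl U₁ U₂ → U₁ = ⊥ ∨ U₂ = ⊥

/-- The vector `v` spans a copy of the character `χ^j` inside a representation of `D`:
the generators act on `v` by the scalars `χ^j(a) = ξ^j`, `χ^j(b) = χ^j(c) = χ^j(x) = 0`,
`χ^j(d) = ξ^{-j}`, `χ^j(g) = (-1)^j`. -/
def ChiOn (ρ : DAlg 𝕜 ξ ν →ₐ[𝕜] Module.End 𝕜 V) (j : ZMod 4) (v : V) : Prop :=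
  ρ (gA 𝕜 ξ ν) v = ξ ^ j.val • v ∧ ρ (gB 𝕜 ξ ν) v = 0 ∧ ρ (gC 𝕜 ξ ν) v = 0 ∧
  ρ (gD 𝕜 ξ ν) v = (ξ ^ j.val)⁻¹ • v ∧ ρ (gX 𝕜 ξ ν) v = 0 ∧
  ρ (gG 𝕜 ξ ν) v = (-1 : 𝕜) ^ j.val • v

/-- The pair `(e₁, e₂)` realizes the defining action of the module `V_{i,j}`. -/
def VijOn (ρ : DAlg 𝕜 ξ ν →ₐ[𝕜] Module.End 𝕜 V) (i j : ZMod 4) (e₁ e₂ : V) : Prop :=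
  ρ (gA 𝕜 ξ ν) e₁ = ξ ^ i.val • e₁ ∧ ρ (gA 𝕜 ξ ν) e₂ = ξ ^ (i.val + 3) • e₂ ∧
  ρ (gB 𝕜 ξ ν) e₁ = 0 ∧ ρ (gB 𝕜 ξ ν) e₂ = (-1 : 𝕜) ^ i.val • e₁ ∧
  ρ (gC 𝕜 ξ ν) e₁ = 0 ∧ ρ (gC 𝕜 ξ ν) e₂ = e₁ ∧
  ρ (gD 𝕜 ξ ν) e₁ = (ξ ^ i.val)⁻¹ • e₁ ∧ ρ (gD 𝕜 ξ ν) e₂ = (ξ * (ξ ^ i.val)⁻¹) • e₂ ∧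
  ρ (gG 𝕜 ξ ν) e₁ = ξ ^ j.val • e₁ ∧ ρ (gG 𝕜 ξ ν) e₂ = ξ ^ (j.val + 2) • e₂ ∧
  ρ (gX 𝕜 ξ ν) e₁ = (ν * ξ * (ξ ^ (3 * i.val) - ξ ^ (i.val + j.val))) • e₂ ∧
  ρ (gX 𝕜 ξ ν) e₂ = (ν * ξ / 2 * (ξ ^ i.val + ξ ^ (3 * i.val + j.val))) • e₁

/-- The tuple `p` realizes the defining action of the module `P(ℓ) = P ⊗ k_{χ^ℓ}`
(`P = P(0)` being the projective cover of the trivial module). -/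
def POn (ρ : DAlg 𝕜 ξ ν →ₐ[𝕜] Module.End 𝕜 V) (ℓ : ZMod 4) (p : Fin 4 → V) : Prop :=
  ρ (gA 𝕜 ξ ν) (p 0) = ξ ^ ℓ.val • p 0 ∧ ρ (gA 𝕜 ξ ν) (p 1) = -(ξ ^ (ℓ.val + 1)) • p 1 ∧
  ρ (gA 𝕜 ξ ν) (p 2) = ξ ^ (ℓ.val + 1) • p 2 ∧ ρ (gA 𝕜 ξ ν) (p 3) = ξ ^ ℓ.val • p 3 ∧
  ρ (gB 𝕜 ξ ν) (p 0) = ξ ^ ℓ.val • p 2 ∧ ρ (gB 𝕜 ξ ν) (p 1) = ξ ^ (ℓ.val + 1) • p 3 ∧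
  ρ (gB 𝕜 ξ ν) (p 2) = 0 ∧ ρ (gB 𝕜 ξ ν) (p 3) = 0 ∧
  ρ (gC 𝕜 ξ ν) (p 0) = -((ξ ^ ℓ.val)⁻¹) • p 2 ∧
  ρ (gC 𝕜 ξ ν) (p 1) = (ξ * (ξ ^ ℓ.val)⁻¹) • p 3 ∧
  ρ (gC 𝕜 ξ ν) (p 2) = 0 ∧ ρ (gC 𝕜 ξ ν) (p 3) = 0 ∧
  ρ (gD 𝕜 ξ ν) (p 0) = (ξ ^ ℓ.val)⁻¹ • p 0 ∧
  ρ (gD 𝕜 ξ ν) (p 1) = (ξ * (ξ ^ ℓ.val)⁻¹) • p 1 ∧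
  ρ (gD 𝕜 ξ ν) (p 2) = -(ξ * (ξ ^ ℓ.val)⁻¹) • p 2 ∧
  ρ (gD 𝕜 ξ ν) (p 3) = (ξ ^ ℓ.val)⁻¹ • p 3 ∧
  ρ (gX 𝕜 ξ ν) (p 0) = p 1 + ν • p 2 ∧ ρ (gX 𝕜 ξ ν) (p 1) = -(ν • p 3) ∧
  ρ (gX 𝕜 ξ ν) (p 2) = p 3 ∧ ρ (gX 𝕜 ξ ν) (p 3) = 0 ∧
  ρ (gG 𝕜 ξ ν) (p 0) = (-1 : 𝕜) ^ ℓ.val • p 0 ∧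
  ρ (gG 𝕜 ξ ν) (p 1) = -((-1 : 𝕜) ^ ℓ.val) • p 1 ∧
  ρ (gG 𝕜 ξ ν) (p 2) = -((-1 : 𝕜) ^ ℓ.val) • p 2 ∧
  ρ (gG 𝕜 ξ ν) (p 3) = (-1 : 𝕜) ^ ℓ.val • p 3

/-- `ρT` is the tensor product representation of `ρM` and `ρN` on `M ⊗ N`, where the action
of `D` on a tensor product is given through the coproduct of the Drinfeld double:
`a ↦ a⊗a + c⊗b`, `b ↦ b⊗a + d⊗b`, `c ↦ a⊗c + c⊗d`, `d ↦ b⊗c + d⊗d`, `g ↦ g⊗g`,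
`x ↦ x⊗1 + g⊗x`. -/
def TensorRepOn (ρM : DAlg 𝕜 ξ ν →ₐ[𝕜] Module.End 𝕜 V) (ρN : DAlg 𝕜 ξ ν →ₐ[𝕜] Module.End 𝕜 W)
    (ρT : DAlg 𝕜 ξ ν →ₐ[𝕜] Module.End 𝕜 (V ⊗[𝕜] W)) : Prop :=
  ρT (gA 𝕜 ξ ν) = TensorProduct.map (ρM (gA 𝕜 ξ ν)) (ρN (gA 𝕜 ξ ν)) +
      TensorProduct.map (ρM (gC 𝕜 ξ ν)) (ρN (gB 𝕜 ξ ν)) ∧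
  ρT (gB 𝕜 ξ ν) = TensorProduct.map (ρM (gB 𝕜 ξ ν)) (ρN (gA 𝕜 ξ ν)) +
      TensorProduct.map (ρM (gD 𝕜 ξ ν)) (ρN (gB 𝕜 ξ ν)) ∧
  ρT (gC 𝕜 ξ ν) = TensorProduct.map (ρM (gA 𝕜 ξ ν)) (ρN (gC 𝕜 ξ ν)) +
      TensorProduct.map (ρM (gC 𝕜 ξ ν)) (ρN (gD 𝕜 ξ ν)) ∧
  ρT (gD 𝕜 ξ ν) = TensorProduct.map (ρM (gB 𝕜 ξ ν)) (ρN (gC 𝕜 ξ ν)) +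
      TensorProduct.map (ρM (gD 𝕜 ξ ν)) (ρN (gD 𝕜 ξ ν)) ∧
  ρT (gG 𝕜 ξ ν) = TensorProduct.map (ρM (gG 𝕜 ξ ν)) (ρN (gG 𝕜 ξ ν)) ∧
  ρT (gX 𝕜 ξ ν) = TensorProduct.map (ρM (gX 𝕜 ξ ν)) LinearMap.id +
      TensorProduct.map (ρM (gG 𝕜 ξ ν)) (ρN (gX 𝕜 ξ ν))

/-!
Decompose `D` by the weights `(l, m)`, the joint eigenvalues of `a` and `g`. On a vector `v` of
weight `(l, m)` the element `x` can be corrected by a multiple of `c` to an element `Y` shifting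
weights; then `c² = 0`, `Y² = 0` and `Y c - ξ c Y` is the scalar `ν (l⁻¹ - m l)`. So `D v` is
spanned by `v, c v, Y v, c Y v`. If `m = l²` the scalar vanishes and this is the action of `P(ℓ)`,
where `l = ξ ^ ℓ`. If `m ≠ l²`, the scalar splits `v` into a part killed by `Y` and a part in the
image of `c Y`, and both lie in copies of modules `V_{i,j}`.

Applied to the 16 weight idempotents, whose sum is `1`, this writes `D` as the sum of the claimed
left ideals, with 64 spanning vectors in total. The sum is direct because `dim D ≥ 64`: each weight
has a 4-dimensional module generated by a vector of that weight, and evaluating on these 16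
generators maps `D` onto the sum of the 16 modules.
-/

section RootsOfUnity

lemma sq_eq_neg_one_of_isPrimitiveRoot {ξ : 𝕜} (hξ : IsPrimitiveRoot ξ 4) : ξ ^ 2 = -1 :=
  (hξ.pow (by norm_num) rfl).eq_neg_one_of_two_right

lemma two_ne_zero_of_isPrimitiveRoot {ξ : 𝕜} (hξ : IsPrimitiveRoot ξ 4) : (2 : 𝕜) ≠ 0 := by
  have h4 : (4 : 𝕜) ≠ 0 := mod_cast hξ.neZero'.out
  exact fun h => h4 (by linear_combination 2 * h)

lemma pow_pow_four_eq_one (hξ : ξ ^ 2 = -1) (n : ℕ) : (ξ ^ n) ^ 4 = 1 := by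
  rw [pow_right_comm, show ξ ^ 4 = (ξ ^ 2) ^ 2 by ring, hξ, neg_one_sq, one_pow]

lemma pow_val_add {M : Type*} [Monoid M] {n : ℕ} [NeZero n] {ζ : M} (hζ : ζ ^ n = 1)
    (i j : ZMod n) : ζ ^ (i + j).val = ζ ^ i.val * ζ ^ j.val := by
  rw [ZMod.val_add, ← pow_eq_pow_mod _ hζ, pow_add]

lemma pow_val_injective {M : Type*} [CommMonoid M] {n : ℕ} [NeZero n] {ζ : M}
    (hζ : IsPrimitiveRoot ζ n) : Function.Injective fun i : ZMod n => ζ ^ i.val :=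
  fun i j h => ZMod.val_injective n (hζ.pow_inj i.val_lt j.val_lt h)

lemma pow_val_ne_sq_of_two_mul_ne (hξ : IsPrimitiveRoot ξ 4) {i j : ZMod 4} (hij : 2 * i ≠ j) :
    ξ ^ j.val ≠ (ξ ^ i.val) ^ 2 := by
  rw [sq, ← pow_val_add hξ.pow_eq_one, ← two_mul]
  exact (pow_val_injective hξ).ne hij.symm

end RootsOfUnity

section Eigenproj

variable {K R : Type*} [Field K] [Ring R] [Algebra K R]

/-- The projection onto the `ζ`-eigenspace of an element `t` with `t ^ n = 1`, as a polynomial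
in `t`. -/
noncomputable def eigenproj (n : ℕ) (ζ : K) (t : R) : R :=
  (n : K)⁻¹ • ∑ k ∈ Finset.range n, (ζ⁻¹ • t) ^ k

lemma mul_eigenproj {n : ℕ} {ζ : K} {t : R} (hζ : ζ ^ n = 1) (hζ₀ : ζ ≠ 0) (ht : t ^ n = 1) :
    t * eigenproj n ζ t = ζ • eigenproj n ζ t := by
  have hfix : (ζ⁻¹ • t) * ∑ k ∈ Finset.range n, (ζ⁻¹ • t) ^ k =
      ∑ k ∈ Finset.range n, (ζ⁻¹ • t) ^ k := by
    rw [← sub_eq_zero, ← sub_one_mul, mul_geom_sum, smul_pow, inv_pow, hζ, ht, inv_one, one_smul,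
      sub_self]
  rw [eigenproj, mul_smul_comm, smul_comm ζ]
  nth_rw 2 [← hfix]
  rw [smul_mul_assoc, smul_inv_smul₀ hζ₀]

lemma map_eigenproj {S : Type*} [Ring S] [Algebra K S] (φ : R →ₐ[K] S) (n : ℕ) (ζ : K) (t : R) :
    φ (eigenproj n ζ t) = eigenproj n ζ (φ t) := by
  simp only [eigenproj, map_smul, map_sum, map_pow]

lemma commute_eigenproj_right {s t : R} (h : Commute s t) (n : ℕ) (ζ : K) :
    Commute s (eigenproj n ζ t) :=
  (Commute.sum_right _ _ _ fun k _ => (h.smul_right ζ⁻¹).pow_right k).smul_right _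

lemma eigenproj_apply_of_apply_eq_smul {V : Type*} [AddCommGroup V] [Module K V] {ζ η : K}
    {T : Module.End K V} {v : V} (n : ℕ) (hv : T v = η • v) :
    eigenproj n ζ T v = ((n : K)⁻¹ * ∑ k ∈ Finset.range n, (ζ⁻¹ * η) ^ k) • v := by
  have hpow (k : ℕ) : ((ζ⁻¹ • T) ^ k) v = (ζ⁻¹ * η) ^ k • v := by
    induction k with
    | zero => simp
    | succ k ih =>
      rw [pow_succ', Module.End.mul_apply, ih, map_smul, LinearMap.smul_apply, hv, smul_smul,
        smul_smul, pow_succ, mul_assoc]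
  simp only [eigenproj, LinearMap.smul_apply, LinearMap.sum_apply, hpow, ← Finset.sum_smul,
    smul_smul]

lemma eigenproj_apply_eq_self {V : Type*} [AddCommGroup V] [Module K V] {n : ℕ} {ζ : K}
    {T : Module.End K V} {v : V} (hn : (n : K) ≠ 0) (hζ : ζ ≠ 0) (hv : T v = ζ • v) :
    eigenproj n ζ T v = v := by
  simp [eigenproj_apply_of_apply_eq_smul n hv, inv_mul_cancel₀ hζ, hn]

lemma eigenproj_apply_eq_zero {V : Type*} [AddCommGroup V] [Module K V] {n : ℕ} {ζ η : K}
    {T : Module.End K V} {v : V} (hζ : ζ ^ n = 1) (hη : η ^ n = 1) (hne : η ≠ ζ)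
    (hv : T v = η • v) : eigenproj n ζ T v = 0 := by
  have hratio : (ζ⁻¹ * η) ^ n = 1 := by rw [mul_pow, inv_pow, hζ, hη, inv_one, one_mul]
  have hne_one : ζ⁻¹ * η ≠ 1 := by
    rintro h
    rcases eq_or_ne ζ 0 with rfl | hζ₀
    · simp at h
    · exact hne ((inv_mul_eq_one₀ hζ₀).mp h).symm
  rw [eigenproj_apply_of_apply_eq_smul n hv, geom_sum_eq hne_one, hratio, sub_self, zero_div,
    mul_zero, zero_smul]

lemma sum_zmod_inv_pow_val_pow {n : ℕ} [NeZero n] {ξ : K} (hξ : IsPrimitiveRoot ξ n) {k : ℕ}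
    (hk : k < n) : ∑ i : ZMod n, ((ξ ^ i.val)⁻¹) ^ k = if k = 0 then (n : K) else 0 := by
  have hchar (i : ZMod n) : ((ξ ^ i.val)⁻¹) ^ k =
      AddChar.zmodChar n hξ.inv.pow_eq_one (i * (k : ZMod n)) := by
    rw [mul_comm, ← nsmul_eq_mul, AddChar.map_nsmul_eq_pow, AddChar.zmodChar_apply]
    simp only [inv_pow]
  have hk_cast : (k : ZMod n) = 0 ↔ k = 0 := by
    rw [ZMod.natCast_eq_zero_iff]
    exact ⟨fun h => Nat.eq_zero_of_dvd_of_lt h hk, fun h => h ▸ dvd_zero n⟩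
  simp_rw [hchar, AddChar.sum_mulShift (k : ZMod n)
    (AddChar.zmodChar_primitive_of_primitive_root n hξ.inv), hk_cast, ZMod.card]
  split_ifs <;> simp

lemma sum_eigenproj {n : ℕ} [NeZero n] {ξ : K} (hξ : IsPrimitiveRoot ξ n) (t : R) :
    ∑ i : ZMod n, eigenproj n (ξ ^ i.val) t = 1 := by
  have hn : (n : K) ≠ 0 := hξ.neZero'.out
  simp_rw [eigenproj, ← Finset.smul_sum, smul_pow]
  rw [Finset.sum_comm, Finset.sum_congr rfl fun k hk => by
    rw [← Finset.sum_smul, sum_zmod_inv_pow_val_pow hξ (Finset.mem_range.mp hk)]]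
  simp [ite_smul, Finset.sum_ite_eq', NeZero.pos n, hn]

end Eigenproj

lemma iSupIndep_span_range_of_linearIndependent_sigma {K M ι : Type*} {κ : ι → Type*} [Ring K]
    [AddCommGroup M] [Module K M] {v : ∀ i, κ i → M}
    (hv : LinearIndependent K fun p : Σ i, κ i => v p.1 p.2) :
    iSupIndep fun i => Submodule.span K (Set.range (v i)) := by
  intro i
  have h := hv.disjoint_span_image (s := Sigma.fst ⁻¹' {i}) (t := (Sigma.fst ⁻¹' {i})ᶜ)
    disjoint_compl_right
  refine h.mono (Submodule.span_mono ?_) (iSup₂_le fun j hj => Submodule.span_mono ?_)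
  · rintro _ ⟨k, rfl⟩
    exact ⟨⟨i, k⟩, rfl, rfl⟩
  · rintro _ ⟨k, rfl⟩
    exact ⟨⟨j, k⟩, hj, rfl⟩

variable (𝕜 ξ ν) in
/-- The generators of `D` as a family, so that they can be treated uniformly. -/
noncomputable def gen : DGen → DAlg 𝕜 ξ ν
  | .a => gA 𝕜 ξ ν
  | .b => gB 𝕜 ξ ν
  | .c => gC 𝕜 ξ ν
  | .d => gD 𝕜 ξ ν
  | .x => gX 𝕜 ξ ν
  | .g => gG 𝕜 ξ ν

lemma mkAlgHom_ι (t : DGen) :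
    RingQuot.mkAlgHom 𝕜 (DRel 𝕜 ξ ν) (FreeAlgebra.ι 𝕜 t) = gen 𝕜 ξ ν t := by
  cases t <;> rfl

lemma gA_pow_four : gA 𝕜 ξ ν ^ 4 = 1 := by
  simpa [gA] using RingQuot.mkAlgHom_rel 𝕜 (DRel.afour (𝕜 := 𝕜) (ξ := ξ) (ν := ν))

lemma gG_pow_four : gG 𝕜 ξ ν ^ 4 = 1 := by
  simpa [gG] using RingQuot.mkAlgHom_rel 𝕜 (DRel.gfour (𝕜 := 𝕜) (ξ := ξ) (ν := ν))

lemma commute_gA_gG : Commute (gA 𝕜 ξ ν) (gG 𝕜 ξ ν) := by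
  simpa [gA, gG, Commute, SemiconjBy] using
    RingQuot.mkAlgHom_rel 𝕜 (DRel.ag (𝕜 := 𝕜) (ξ := ξ) (ν := ν))

section Representation

variable (ρ : DAlg 𝕜 ξ ν →ₐ[𝕜] Module.End 𝕜 V)

lemma rep_eq_of_dRel {p q : FreeAlgebra 𝕜 DGen} (h : DRel 𝕜 ξ ν p q) (v : V) :
    ρ (RingQuot.mkAlgHom 𝕜 (DRel 𝕜 ξ ν) p) v = ρ (RingQuot.mkAlgHom 𝕜 (DRel 𝕜 ξ ν) q) v := by
  rw [RingQuot.mkAlgHom_rel 𝕜 h]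

lemma rep_gA_gC (v : V) : ρ (gA 𝕜 ξ ν) (ρ (gC 𝕜 ξ ν) v) = ξ • ρ (gC 𝕜 ξ ν) (ρ (gA 𝕜 ξ ν) v) := by
  simpa [gA, gC] using rep_eq_of_dRel ρ .ac v

lemma rep_gD_gA (v : V) : ρ (gD 𝕜 ξ ν) (ρ (gA 𝕜 ξ ν) v) = v := by
  simpa [gA, gD] using (rep_eq_of_dRel ρ .adcomm v).symm.trans (rep_eq_of_dRel ρ .adone v)

lemma rep_gC_gC (v : V) : ρ (gC 𝕜 ξ ν) (ρ (gC 𝕜 ξ ν) v) = 0 := by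
  simpa [gC] using rep_eq_of_dRel ρ .csq v

lemma rep_gB (v : V) : ρ (gB 𝕜 ξ ν) v = ρ (gA 𝕜 ξ ν) (ρ (gA 𝕜 ξ ν) (ρ (gC 𝕜 ξ ν) v)) := by
  simpa [gA, gB, gC] using (rep_eq_of_dRel ρ .aac v).symm

lemma rep_gX_gX (v : V) :
    ρ (gX 𝕜 ξ ν) (ρ (gX 𝕜 ξ ν) v) = ρ (gG 𝕜 ξ ν) (ρ (gG 𝕜 ξ ν) v) - v := by
  simpa [gX, gG] using rep_eq_of_dRel ρ .xsq v

lemma rep_gG_gX (v : V) : ρ (gG 𝕜 ξ ν) (ρ (gX 𝕜 ξ ν) v) = -ρ (gX 𝕜 ξ ν) (ρ (gG 𝕜 ξ ν) v) := by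
  simpa [gX, gG] using rep_eq_of_dRel ρ .gx v

lemma rep_gG_gC (v : V) : ρ (gG 𝕜 ξ ν) (ρ (gC 𝕜 ξ ν) v) = -ρ (gC 𝕜 ξ ν) (ρ (gG 𝕜 ξ ν) v) := by
  rw [eq_neg_iff_add_eq_zero, add_comm, ← eq_neg_iff_add_eq_zero]
  simpa [gC, gG] using rep_eq_of_dRel ρ .cg v

lemma rep_gA_gX (v : V) :
    ρ (gA 𝕜 ξ ν) (ρ (gX 𝕜 ξ ν) v) =
      (ν * ξ) • (ρ (gB 𝕜 ξ ν) v + ρ (gG 𝕜 ξ ν) (ρ (gC 𝕜 ξ ν) v)) -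
        ξ • ρ (gX 𝕜 ξ ν) (ρ (gA 𝕜 ξ ν) v) := by
  simpa [gA, gX, gB, gG, gC] using rep_eq_of_dRel ρ .axr v

lemma rep_gC_gX (v : V) :
    ρ (gC 𝕜 ξ ν) (ρ (gX 𝕜 ξ ν) v) =
      (ν * ξ) • (ρ (gD 𝕜 ξ ν) v - ρ (gG 𝕜 ξ ν) (ρ (gA 𝕜 ξ ν) v)) -
        ξ • ρ (gX 𝕜 ξ ν) (ρ (gC 𝕜 ξ ν) v) := by
  simpa [gA, gX, gD, gG, gC] using rep_eq_of_dRel ρ .cxr v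

variable (𝕜 ξ ν) in
/-- The element `Y = x + κ c`, where `κ` depends on a weight `(l, m)` and is chosen so that `Y`
sends the vectors of weight `(l, m)` to vectors of weight `(-ξ l, -m)`. -/
noncomputable def gY (l m : 𝕜) : DAlg 𝕜 ξ ν :=
  gX 𝕜 ξ ν + (ν / 2 * (l + l⁻¹ * m)) • gC 𝕜 ξ ν

lemma rep_gX_eq (l m : 𝕜) (v : V) :
    ρ (gX 𝕜 ξ ν) v = ρ (gY 𝕜 ξ ν l m) v - (ν / 2 * (l + l⁻¹ * m)) • ρ (gC 𝕜 ξ ν) v := by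
  simp [gY]

/-- `v` is a simultaneous eigenvector (possibly zero) of `a` and `g`, with eigenvalues `l`
and `m`. -/
structure IsWeightVector (l m : 𝕜) (v : V) : Prop where
  gA_apply : ρ (gA 𝕜 ξ ν) v = l • v
  gG_apply : ρ (gG 𝕜 ξ ν) v = m • v

end Representation

namespace IsWeightVector

variable {ρ : DAlg 𝕜 ξ ν →ₐ[𝕜] Module.End 𝕜 V} {l m : 𝕜} {v w : V}

lemma sub (hv : IsWeightVector ρ l m v) (hw : IsWeightVector ρ l m w) :
    IsWeightVector ρ l m (v - w) where
  gA_apply := by rw [map_sub, hv.gA_apply, hw.gA_apply, smul_sub]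
  gG_apply := by rw [map_sub, hv.gG_apply, hw.gG_apply, smul_sub]

lemma smul (hv : IsWeightVector ρ l m v) (r : 𝕜) : IsWeightVector ρ l m (r • v) where
  gA_apply := by rw [map_smul, hv.gA_apply, smul_comm]
  gG_apply := by rw [map_smul, hv.gG_apply, smul_comm]

lemma apply_gC (hv : IsWeightVector ρ l m v) : IsWeightVector ρ (ξ * l) (-m) (ρ (gC 𝕜 ξ ν) v) where
  gA_apply := by rw [rep_gA_gC, hv.gA_apply, map_smul, smul_smul]
  gG_apply := by rw [rep_gG_gC, hv.gG_apply, map_smul, neg_smul]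

lemma gD_apply (hv : IsWeightVector ρ l m v) (hl : l ≠ 0) : ρ (gD 𝕜 ξ ν) v = l⁻¹ • v := by
  rw [eq_inv_smul_iff₀ hl, ← map_smul, ← hv.gA_apply, rep_gD_gA]

lemma gB_apply (hv : IsWeightVector ρ l m v) :
    ρ (gB 𝕜 ξ ν) v = (ξ * l) ^ 2 • ρ (gC 𝕜 ξ ν) v := by
  rw [rep_gB, hv.apply_gC.gA_apply, map_smul, hv.apply_gC.gA_apply, smul_smul, sq]

lemma gX_gC_apply (hv : IsWeightVector ρ l m v) (hξ : ξ ^ 2 = -1) (hl : l ≠ 0) :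
    ρ (gX 𝕜 ξ ν) (ρ (gC 𝕜 ξ ν) v) =
      ξ • ρ (gC 𝕜 ξ ν) (ρ (gY 𝕜 ξ ν l m) v) + (ν * (l⁻¹ - m * l)) • v := by
  have hCY : ρ (gC 𝕜 ξ ν) (ρ (gY 𝕜 ξ ν l m) v) = ρ (gC 𝕜 ξ ν) (ρ (gX 𝕜 ξ ν) v) := by
    simp [gY, rep_gC_gC]
  rw [hCY, rep_gC_gX, hv.gD_apply hl, hv.gA_apply, map_smul, hv.gG_apply]
  match_scalars <;> grind

lemma apply_gY (hv : IsWeightVector ρ l m v) (hξ : ξ ^ 2 = -1) (h2 : (2 : 𝕜) ≠ 0) (hl : l ≠ 0) :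
    IsWeightVector ρ (-(ξ * l)) (-m) (ρ (gY 𝕜 ξ ν l m) v) where
  gA_apply := by
    simp only [gY, map_add, map_smul, LinearMap.add_apply, LinearMap.smul_apply, rep_gA_gX,
      hv.gB_apply, hv.apply_gC.gG_apply, hv.gA_apply, hv.apply_gC.gA_apply]
    match_scalars <;> grind
  gG_apply := by
    simp only [gY, map_add, map_smul, LinearMap.add_apply, LinearMap.smul_apply, rep_gG_gX,
      hv.apply_gC.gG_apply, hv.gG_apply]
    module

lemma gY_gY_apply (hv : IsWeightVector ρ l m v) (hξ : ξ ^ 2 = -1) (hν : ν ^ 2 = 2)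
    (h2 : (2 : 𝕜) ≠ 0) (hl : l ^ 4 = 1) :
    ρ (gY 𝕜 ξ ν (-(ξ * l)) (-m)) (ρ (gY 𝕜 ξ ν l m) v) = 0 := by
  have hl₀ : l ≠ 0 := by rintro rfl; simp at hl
  have hYC := hv.gX_gC_apply hξ hl₀
  have hXY : ρ (gX 𝕜 ξ ν) (ρ (gY 𝕜 ξ ν l m) v) =
      (ν / 2 * (l + l⁻¹ * m)) • ρ (gX 𝕜 ξ ν) (ρ (gC 𝕜 ξ ν) v) + (m ^ 2 - 1) • v := by
    simp only [gY, map_add, map_smul, LinearMap.add_apply, LinearMap.smul_apply, rep_gX_gX,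
      hv.gG_apply]
    module
  rw [gY, map_add, map_smul, LinearMap.add_apply, LinearMap.smul_apply, hXY, hYC]
  match_scalars <;> grind

end IsWeightVector

section Invariance

variable {ρ : DAlg 𝕜 ξ ν →ₐ[𝕜] Module.End 𝕜 V}

lemma dInvariant_of_gen {U : Submodule 𝕜 V} (h : ∀ t, ∀ w ∈ U, ρ (gen 𝕜 ξ ν t) w ∈ U) :
    DInvariant ρ U := by
  intro z
  obtain ⟨z, rfl⟩ := RingQuot.mkAlgHom_surjective 𝕜 (DRel 𝕜 ξ ν) z
  induction z using FreeAlgebra.induction with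
  | grade0 r => intro w hw; simpa [Algebra.algebraMap_eq_smul_one] using U.smul_mem r hw
  | grade1 t => rw [mkAlgHom_ι]; exact h t
  | mul p q hp hq => intro w hw; rw [map_mul, map_mul]; exact hp _ (hq w hw)
  | add p q hp hq => intro w hw; rw [map_add, map_add]; exact U.add_mem (hp w hw) (hq w hw)

lemma dInvariant_span_range_of_gen {ι : Type*} {v : ι → V}
    (h : ∀ t i, ρ (gen 𝕜 ξ ν t) (v i) ∈ Submodule.span 𝕜 (Set.range v)) :
    DInvariant ρ (Submodule.span 𝕜 (Set.range v)) :=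
  dInvariant_of_gen fun t => by
    have hle : Submodule.span 𝕜 (Set.range v) ≤
        (Submodule.span 𝕜 (Set.range v)).comap (ρ (gen 𝕜 ξ ν t)) := by
      rw [Submodule.span_le]
      rintro _ ⟨i, rfl⟩
      exact h t i
    exact hle

lemma VijOn.dInvariant_span_range {i j : ZMod 4} {e : Fin 2 → V}
    (h : VijOn ρ i j (e 0) (e 1)) : DInvariant ρ (Submodule.span 𝕜 (Set.range e)) := by
  refine dInvariant_span_range_of_gen fun t i => ?_
  have hmem (i : Fin 2) : e i ∈ Submodule.span 𝕜 (Set.range e) := Submodule.subset_span ⟨i, rfl⟩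
  obtain ⟨a₁, a₂, b₁, b₂, c₁, c₂, d₁, d₂, g₁, g₂, x₁, x₂⟩ := h
  fin_cases i <;> cases t <;>
  simp only [gen, Fin.zero_eta, Fin.mk_one, a₁, a₂, b₁, b₂, c₁, c₂, d₁, d₂, g₁, g₂, x₁, x₂, hmem,
    Submodule.zero_mem, Submodule.smul_mem]

lemma POn.dInvariant_span_range {ℓ : ZMod 4} {p : Fin 4 → V} (h : POn ρ ℓ p) :
    DInvariant ρ (Submodule.span 𝕜 (Set.range p)) := by
  refine dInvariant_span_range_of_gen fun t i => ?_
  have hmem (i : Fin 4) : p i ∈ Submodule.span 𝕜 (Set.range p) := Submodule.subset_span ⟨i, rfl⟩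
  obtain ⟨a₁, a₂, a₃, a₄, b₁, b₂, b₃, b₄, c₁, c₂, c₃, c₄, d₁, d₂, d₃, d₄, x₁, x₂, x₃, x₄,
    g₁, g₂, g₃, g₄⟩ := h
  fin_cases i <;> cases t <;>
  simp only [gen, Fin.zero_eta, Fin.mk_one, Fin.reduceFinMk, a₁, a₂, a₃, a₄, b₁, b₂, b₃, b₄,
    c₁, c₂, c₃, c₄, d₁, d₂, d₃, d₄, x₁, x₂, x₃, x₄, g₁, g₂, g₃, g₄, hmem, Submodule.zero_mem,
    Submodule.smul_mem, Submodule.add_mem, Submodule.neg_mem]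

end Invariance

section Modules

variable {ρ : DAlg 𝕜 ξ ν →ₐ[𝕜] Module.End 𝕜 V}

lemma vijOn_of_isWeightVector {i j : ZMod 4} {e : V} (hξ : ξ ^ 2 = -1) (h2 : (2 : 𝕜) ≠ 0)
    (he : IsWeightVector ρ (-(ξ * ξ ^ i.val)) (-ξ ^ j.val) e)
    (hYe : ρ (gY 𝕜 ξ ν (-(ξ * ξ ^ i.val)) (-ξ ^ j.val)) e = 0) :
    VijOn ρ i j (ρ (gC 𝕜 ξ ν) e) e := by
  have hl4 := pow_pow_four_eq_one hξ i.val
  have hpar : (-1 : 𝕜) ^ i.val = (ξ ^ i.val) ^ 2 := by rw [← hξ, pow_right_comm]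
  have hXe := rep_gX_eq ρ (-(ξ * ξ ^ i.val)) (-ξ ^ j.val) e
  rw [hYe] at hXe
  unfold VijOn
  rw [pow_add ξ i.val, pow_add ξ j.val 2, pow_add ξ i.val, pow_add ξ (3 * i.val), hpar,
    mul_comm 3 i.val, pow_mul ξ]
  generalize ξ ^ i.val = l at *
  generalize ξ ^ j.val = m at *
  have hl : l ≠ 0 := by rintro rfl; simp at hl4
  have hξ₀ : ξ ≠ 0 := by rintro rfl; simp at hξ
  have hl' : -(ξ * l) ≠ 0 := neg_ne_zero.mpr (mul_ne_zero hξ₀ hl)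
  have hCe := he.apply_gC
  have hXCe := he.gX_gC_apply hξ hl'
  rw [hYe] at hXCe
  simp only [he.gA_apply, hCe.gA_apply, he.gG_apply, hCe.gG_apply, he.gB_apply, hCe.gB_apply,
    he.gD_apply hl', hCe.gD_apply (mul_ne_zero hξ₀ hl'), rep_gC_gC, hXCe, hXe, smul_zero,
    map_zero, true_and]
  clear he hYe hXe hCe hXCe hpar
  and_intros <;> match_scalars <;> grind

lemma pOn_of_isWeightVector {ℓ : ZMod 4} {w : V} (hξ : ξ ^ 2 = -1) (hν : ν ^ 2 = 2)
    (h2 : (2 : 𝕜) ≠ 0) (hw : IsWeightVector ρ (ξ ^ ℓ.val) ((ξ ^ ℓ.val) ^ 2) w) :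
    POn ρ ℓ ![w, ρ (gY 𝕜 ξ ν (ξ ^ ℓ.val) ((ξ ^ ℓ.val) ^ 2)) w, -ξ ^ ℓ.val • ρ (gC 𝕜 ξ ν) w,
      -(ξ ^ ℓ.val * ξ) •
        ρ (gC 𝕜 ξ ν) (ρ (gY 𝕜 ξ ν (ξ ^ ℓ.val) ((ξ ^ ℓ.val) ^ 2)) w)] := by
  have hl4 := pow_pow_four_eq_one hξ ℓ.val
  have hpar : (-1 : 𝕜) ^ ℓ.val = (ξ ^ ℓ.val) ^ 2 := by rw [← hξ, pow_right_comm]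
  unfold POn
  rw [pow_succ ξ ℓ.val, hpar]
  generalize ξ ^ ℓ.val = l at *
  have hl : l ≠ 0 := by rintro rfl; simp at hl4
  have hξ₀ : ξ ≠ 0 := by rintro rfl; simp at hξ
  have hξl : ξ * l ≠ 0 := mul_ne_zero hξ₀ hl
  have hC := hw.apply_gC
  have hY := hw.apply_gY hξ h2 hl
  have hYY := hw.gY_gY_apply hξ hν h2 hl4
  have hXw := rep_gX_eq ρ l (l ^ 2) w
  have hXC := hw.gX_gC_apply hξ hl
  have hXY := rep_gX_eq ρ (-(ξ * l)) (-l ^ 2) (ρ (gY 𝕜 ξ ν l (l ^ 2)) w)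
  have hXCY := hY.gX_gC_apply hξ (neg_ne_zero.mpr hξl)
  rw [hYY] at hXY hXCY
  have hCY := hY.apply_gC
  generalize ρ (gY 𝕜 ξ ν l (l ^ 2)) w = y at *
  simp only [Matrix.cons_val, map_smul, hw.gA_apply, hw.gG_apply, hw.gB_apply, hw.gD_apply hl,
    hC.gA_apply, hC.gG_apply, hC.gB_apply, hC.gD_apply hξl,
    hY.gA_apply, hY.gG_apply, hY.gB_apply, hY.gD_apply (neg_ne_zero.mpr hξl),
    hCY.gA_apply, hCY.gG_apply, hCY.gB_apply,
    hCY.gD_apply (mul_ne_zero hξ₀ (neg_ne_zero.mpr hξl)),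
    rep_gC_gC, hXw, hXC, hXY, hXCY, smul_zero, map_zero, true_and]
  clear hw hC hY hYY hXw hXC hXY hXCY hCY hpar
  and_intros <;> match_scalars <;> grind

end Modules

section Split

variable (𝕜 ξ ν) in
/-- On vectors of weight `(l, m)` with `m ≠ l ^ 2`, the projection onto the kernel of
`gY 𝕜 ξ ν l m` along the image of `c * gY 𝕜 ξ ν l m`. -/
noncomputable def gYKerProj (l m : 𝕜) : DAlg 𝕜 ξ ν :=
  1 - (ν * ξ * (l⁻¹ - m * l))⁻¹ • (gC 𝕜 ξ ν * gY 𝕜 ξ ν l m)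

variable {ρ : DAlg 𝕜 ξ ν →ₐ[𝕜] Module.End 𝕜 V} {l m : 𝕜} {v : V}

namespace IsWeightVector

lemma gY_gC_gY_apply (hv : IsWeightVector ρ l m v) (hξ : ξ ^ 2 = -1) (hν : ν ^ 2 = 2)
    (h2 : (2 : 𝕜) ≠ 0) (hl : l ^ 4 = 1) :
    ρ (gY 𝕜 ξ ν l m) (ρ (gC 𝕜 ξ ν) (ρ (gY 𝕜 ξ ν l m) v)) =
      (ν * ξ * (l⁻¹ - m * l)) • ρ (gY 𝕜 ξ ν l m) v := by
  have hl₀ : l ≠ 0 := by rintro rfl; simp at hl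
  have hξ₀ : ξ ≠ 0 := by rintro rfl; simp at hξ
  have hXCY := (hv.apply_gY hξ h2 hl₀).gX_gC_apply hξ (neg_ne_zero.mpr (mul_ne_zero hξ₀ hl₀))
  rw [hv.gY_gY_apply hξ hν h2 hl, map_zero, smul_zero, zero_add, rep_gX_eq ρ l m, rep_gC_gC,
    smul_zero, sub_zero] at hXCY
  rw [hXCY]
  congr 1
  grind

lemma apply_gYKerProj (hv : IsWeightVector ρ l m v) (hξ : ξ ^ 2 = -1) (h2 : (2 : 𝕜) ≠ 0)
    (hl : l ≠ 0) : IsWeightVector ρ l m (ρ (gYKerProj 𝕜 ξ ν l m) v) := by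
  have hCY := (hv.apply_gY hξ h2 hl).apply_gC
  rw [neg_neg, mul_neg, ← mul_assoc, ← sq, hξ, neg_one_mul, neg_neg] at hCY
  simpa [gYKerProj] using hv.sub (hCY.smul _)

lemma gY_gYKerProj_apply (hv : IsWeightVector ρ l m v) (hξ : ξ ^ 2 = -1) (hν : ν ^ 2 = 2)
    (h2 : (2 : 𝕜) ≠ 0) (hl : l ^ 4 = 1) (hlm : m ≠ l ^ 2) :
    ρ (gY 𝕜 ξ ν l m) (ρ (gYKerProj 𝕜 ξ ν l m) v) = 0 := by
  have hcoeff : ν * ξ * (l⁻¹ - m * l) ≠ 0 := by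
    have hl₀ : l ≠ 0 := by rintro rfl; simp at hl
    have hξ₀ : ξ ≠ 0 := by rintro rfl; simp at hξ
    have hν₀ : ν ≠ 0 := by rintro rfl; simp [h2.symm] at hν
    refine mul_ne_zero (mul_ne_zero hν₀ hξ₀) (sub_ne_zero.mpr fun h => hlm ?_)
    grind
  simp only [gYKerProj, map_sub, map_one, map_smul, map_mul, LinearMap.sub_apply,
    LinearMap.smul_apply, Module.End.one_apply, Module.End.mul_apply,
    hv.gY_gC_gY_apply hξ hν h2 hl, inv_smul_smul₀ hcoeff, sub_self]

end IsWeightVector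

end Split

section WeightIdem

variable (𝕜 ξ ν) in
/-- The idempotent of the group algebra of `⟨a, g⟩ ≅ (ℤ/4)²` projecting onto the vectors of
weight `(l, m)`, for fourth roots of unity `l` and `m`. -/
noncomputable def weightIdem (l m : 𝕜) : DAlg 𝕜 ξ ν :=
  eigenproj 4 l (gA 𝕜 ξ ν) * eigenproj 4 m (gG 𝕜 ξ ν)

lemma isWeightVector_weightIdem {l m : 𝕜} (hl : l ^ 4 = 1) (hm : m ^ 4 = 1) :
    IsWeightVector (Algebra.lmul 𝕜 (DAlg 𝕜 ξ ν)) l m (weightIdem 𝕜 ξ ν l m) where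
  gA_apply := by
    have hl₀ : l ≠ 0 := by rintro rfl; simp at hl
    rw [Algebra.coe_lmul_eq_mul, LinearMap.mul_apply', weightIdem, ← mul_assoc,
      mul_eigenproj hl hl₀ gA_pow_four, smul_mul_assoc]
  gG_apply := by
    have hm₀ : m ≠ 0 := by rintro rfl; simp at hm
    rw [Algebra.coe_lmul_eq_mul, LinearMap.mul_apply', weightIdem,
      (commute_eigenproj_right commute_gA_gG.symm 4 l).left_comm,
      mul_eigenproj hm hm₀ gG_pow_four, mul_smul_comm]

lemma sum_weightIdem (hξ : IsPrimitiveRoot ξ 4) :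
    ∑ p : ZMod 4 × ZMod 4, weightIdem 𝕜 ξ ν (ξ ^ p.1.val) (ξ ^ p.2.val) = 1 := by
  simp only [weightIdem, Fintype.sum_prod_type, ← Finset.mul_sum, sum_eigenproj hξ, mul_one]

variable {ρ : DAlg 𝕜 ξ ν →ₐ[𝕜] Module.End 𝕜 V} {l m l' m' : 𝕜} {v : V}

lemma IsWeightVector.weightIdem_apply (hv : IsWeightVector ρ l m v) (h4 : (4 : 𝕜) ≠ 0)
    (hl : l ≠ 0) (hm : m ≠ 0) : ρ (weightIdem 𝕜 ξ ν l m) v = v := by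
  rw [weightIdem, map_mul, Module.End.mul_apply, map_eigenproj, map_eigenproj,
    eigenproj_apply_eq_self (mod_cast h4) hm hv.gG_apply,
    eigenproj_apply_eq_self (mod_cast h4) hl hv.gA_apply]

lemma IsWeightVector.weightIdem_apply_of_ne (hv : IsWeightVector ρ l m v) (h4 : (4 : 𝕜) ≠ 0)
    (hl : l ^ 4 = 1) (hm : m ^ 4 = 1) (hl' : l' ^ 4 = 1) (hm' : m' ^ 4 = 1)
    (hne : (l, m) ≠ (l', m')) : ρ (weightIdem 𝕜 ξ ν l' m') v = 0 := by
  rw [weightIdem, map_mul, Module.End.mul_apply, map_eigenproj, map_eigenproj]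
  rcases eq_or_ne m m' with rfl | hmm
  · have hm₀ : m ≠ 0 := by rintro rfl; simp at hm
    rw [eigenproj_apply_eq_self (mod_cast h4) hm₀ hv.gG_apply,
      eigenproj_apply_eq_zero hl' hl (fun h => hne (by rw [h])) hv.gA_apply]
  · rw [eigenproj_apply_eq_zero hm' hm hmm hv.gG_apply, map_zero]

end WeightIdem

section InducedRepresentation

variable (ξ ν) in
/-- The action of the generators on the module induced from the character `a ↦ l`, `g ↦ m` of
`⟨a, g⟩`, in the basis `w, c w, Y w, c Y w` with `w` the generating vector and
`Y = gY 𝕜 ξ ν l m`. -/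
def inducedEnd (l m : 𝕜) (t : DGen) : Module.End 𝕜 (Fin 4 → 𝕜) where
  toFun v := match t with
    | .a => ![l * v 0, ξ * l * v 1, -(ξ * l) * v 2, l * v 3]
    | .b => ![0, -l ^ 2 * v 0, 0, l ^ 2 * v 2]
    | .c => ![0, v 0, 0, v 2]
    | .d => ![l⁻¹ * v 0, -(ξ * l⁻¹) * v 1, ξ * l⁻¹ * v 2, l⁻¹ * v 3]
    | .x => ![ν * (l⁻¹ - m * l) * v 1,
        -(ν / 2 * (l + l⁻¹ * m)) * v 0,
        v 0 + ν * ξ * (l⁻¹ - m * l) * v 3,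
        ξ * v 1 + ν / 2 * (l + l⁻¹ * m) * ξ * v 2]
    | .g => ![m * v 0, -m * v 1, -m * v 2, m * v 3]
  map_add' v w := by
    ext i
    cases t <;> fin_cases i <;> simp <;> ring
  map_smul' r v := by
    ext i
    cases t <;> fin_cases i <;> simp <;> ring

variable {l m : 𝕜}

set_option maxHeartbeats 1000000 in
-- 23 relations, each checked in 4 coordinates
lemma lift_inducedEnd_eq_of_dRel (hξ : ξ ^ 2 = -1) (hν : ν ^ 2 = 2) (h2 : (2 : 𝕜) ≠ 0)
    (hl : l ^ 4 = 1) (hm : m ^ 4 = 1) ⦃p q : FreeAlgebra 𝕜 DGen⦄ (h : DRel 𝕜 ξ ν p q) :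
    FreeAlgebra.lift 𝕜 (inducedEnd ξ ν l m) p = FreeAlgebra.lift 𝕜 (inducedEnd ξ ν l m) q := by
  have hl₀ : l ≠ 0 := by rintro rfl; simp at hl
  refine LinearMap.ext fun v => funext fun i => ?_
  cases h <;> fin_cases i <;>
  simp only [map_mul, map_smul, map_neg, map_add, map_sub, map_one, map_zero, map_pow,
    FreeAlgebra.lift_ι_apply, Module.End.mul_apply, pow_succ (_ : Module.End 𝕜 (Fin 4 → 𝕜)),
    pow_zero, one_mul, inducedEnd, LinearMap.coe_mk, AddHom.coe_mk, LinearMap.add_apply,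
    LinearMap.sub_apply, LinearMap.neg_apply, LinearMap.smul_apply, LinearMap.zero_apply,
    Module.End.one_apply, Pi.add_apply, Pi.sub_apply, Pi.neg_apply, Pi.smul_apply, Pi.zero_apply,
    smul_eq_mul, Fin.zero_eta, Fin.mk_one, Fin.reduceFinMk, Matrix.cons_val] <;>
  grind only

end InducedRepresentation

section LowerBound

lemma exists_rep_cyclic_weightVector {l m : 𝕜} (hξ : ξ ^ 2 = -1) (hν : ν ^ 2 = 2)
    (h2 : (2 : 𝕜) ≠ 0) (hl : l ^ 4 = 1) (hm : m ^ 4 = 1) :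
    ∃ (ρ : DAlg 𝕜 ξ ν →ₐ[𝕜] Module.End 𝕜 (Fin 4 → 𝕜)) (w : Fin 4 → 𝕜),
      IsWeightVector ρ l m w ∧ ∀ v, ∃ z, ρ z w = v := by
  let ρ : DAlg 𝕜 ξ ν →ₐ[𝕜] Module.End 𝕜 (Fin 4 → 𝕜) :=
    RingQuot.liftAlgHom 𝕜 ⟨FreeAlgebra.lift 𝕜 (inducedEnd ξ ν l m),
      lift_inducedEnd_eq_of_dRel hξ hν h2 hl hm⟩
  have hgen (t : DGen) : ρ (gen 𝕜 ξ ν t) = inducedEnd ξ ν l m t := by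
    rw [← mkAlgHom_ι, RingQuot.liftAlgHom_mkAlgHom_apply, FreeAlgebra.lift_ι_apply]
  have hC : ρ (gC 𝕜 ξ ν) = inducedEnd ξ ν l m .c := hgen .c
  have hX : ρ (gX 𝕜 ξ ν) = inducedEnd ξ ν l m .x := hgen .x
  refine ⟨ρ, ![1, 0, 0, 0], ⟨(LinearMap.congr_fun (hgen .a) _).trans ?_,
    (LinearMap.congr_fun (hgen .g) _).trans ?_⟩, fun v =>
    ⟨v 0 • 1 + v 1 • gC 𝕜 ξ ν + v 2 • gY 𝕜 ξ ν l m +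
      v 3 • (gC 𝕜 ξ ν * gY 𝕜 ξ ν l m), ?_⟩⟩
  · simp [inducedEnd]
  · simp [inducedEnd]
  · ext i
    fin_cases i <;> simp [gY, hC, hX, inducedEnd]

lemma exists_surjective_pi (hξ : IsPrimitiveRoot ξ 4) (hν : ν ^ 2 = 2) :
    ∃ Φ : DAlg 𝕜 ξ ν →ₗ[𝕜] ZMod 4 × ZMod 4 → Fin 4 → 𝕜, Function.Surjective Φ := by
  have hξ₂ := sq_eq_neg_one_of_isPrimitiveRoot hξ
  have h4 : (4 : 𝕜) ≠ 0 := mod_cast hξ.neZero'.out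
  have h2 := two_ne_zero_of_isPrimitiveRoot hξ
  choose ρ w hw hcyc using fun q : ZMod 4 × ZMod 4 => exists_rep_cyclic_weightVector hξ₂ hν h2
    (pow_pow_four_eq_one hξ₂ q.1.val) (pow_pow_four_eq_one hξ₂ q.2.val)
  refine ⟨LinearMap.pi fun q => LinearMap.applyₗ (w q) ∘ₗ (ρ q).toLinearMap, fun u => ?_⟩
  choose z hz using fun q => hcyc q (u q)
  refine ⟨∑ q, z q * weightIdem 𝕜 ξ ν (ξ ^ q.1.val) (ξ ^ q.2.val), funext fun q => ?_⟩
  have hξ₀ : ξ ≠ 0 := hξ.ne_zero (by norm_num)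
  have hidem (q' : ZMod 4 × ZMod 4) :
      ρ q (z q' * weightIdem 𝕜 ξ ν (ξ ^ q'.1.val) (ξ ^ q'.2.val)) (w q) =
        if q' = q then u q else 0 := by
    rw [map_mul, Module.End.mul_apply]
    split_ifs with h
    · rw [h, (hw q).weightIdem_apply h4 (pow_ne_zero _ hξ₀) (pow_ne_zero _ hξ₀), hz]
    · rw [(hw q).weightIdem_apply_of_ne h4 (pow_pow_four_eq_one hξ₂ _)
        (pow_pow_four_eq_one hξ₂ _) (pow_pow_four_eq_one hξ₂ _) (pow_pow_four_eq_one hξ₂ _)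
        fun heq => h ?_, map_zero]
      exact ((pow_val_injective hξ).prodMap (pow_val_injective hξ) heq).symm
  simp only [LinearMap.pi_apply, LinearMap.comp_apply, AlgHom.toLinearMap_apply,
    LinearMap.applyₗ_apply_apply, map_sum, hidem, Finset.sum_ite_eq',
    Finset.mem_univ, if_true]

lemma le_finrank_dAlg [Module.Finite 𝕜 (DAlg 𝕜 ξ ν)] (hξ : IsPrimitiveRoot ξ 4)
    (hν : ν ^ 2 = 2) : 64 ≤ Module.finrank 𝕜 (DAlg 𝕜 ξ ν) := by
  obtain ⟨Φ, hΦ⟩ := exists_surjective_pi hξ hν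
  simpa [Module.finrank_pi_fintype] using LinearMap.finrank_le_finrank_of_surjective hΦ

end LowerBound

section Summands

/-- The indices of the summands of `D`: `P(ℓ)` for `ℓ ∈ ℤ/4`, and two copies of
`V_{i,j}` for `(i, j) ∈ Λ`. -/
abbrev SummandIndex : Type := ZMod 4 ⊕ {p : ZMod 4 × ZMod 4 // 2 * p.1 ≠ p.2} × Fin 2

/-- The dimension of a summand. -/
def summandDim : SummandIndex → ℕ
  | .inl _ => 4
  | .inr _ => 2

variable (ξ ν) in
/-- The basis `w, Y w, -l c w, -lξ c Y w` of the left ideal generated by the weight idempotent `w`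
of weight `(l, l ^ 2)`; for `l = ξ ^ ℓ` it is a copy of `P(ℓ)`. -/
noncomputable def pBasis (l : 𝕜) : Fin 4 → DAlg 𝕜 ξ ν :=
  ![weightIdem 𝕜 ξ ν l (l ^ 2), gY 𝕜 ξ ν l (l ^ 2) * weightIdem 𝕜 ξ ν l (l ^ 2),
    -l • (gC 𝕜 ξ ν * weightIdem 𝕜 ξ ν l (l ^ 2)),
    -(l * ξ) • (gC 𝕜 ξ ν * (gY 𝕜 ξ ν l (l ^ 2) * weightIdem 𝕜 ξ ν l (l ^ 2)))]

variable (ξ ν) in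
/-- Two generators of copies of `V_{i,j}` in `D`, for `l = ξ ^ i` and `m = ξ ^ j`: both have weight
`(-ξ l, -m)` and are killed by the corresponding `Y`, the first being an image and the second a
kernel element of a `Y`. -/
noncomputable def vGenerator (l m : 𝕜) : Fin 2 → DAlg 𝕜 ξ ν :=
  ![gY 𝕜 ξ ν l m * weightIdem 𝕜 ξ ν l m,
    gYKerProj 𝕜 ξ ν (-(ξ * l)) (-m) * weightIdem 𝕜 ξ ν (-(ξ * l)) (-m)]

variable (ξ ν) in
/-- The basis of the copy of `V_{i,j}` generated by `vGenerator ξ ν l m s`. -/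
noncomputable def vBasis (l m : 𝕜) (s : Fin 2) : Fin 2 → DAlg 𝕜 ξ ν :=
  ![gC 𝕜 ξ ν * vGenerator ξ ν l m s, vGenerator ξ ν l m s]

variable (ξ ν) in
/-- The bases of all summands, as one dependent family. -/
noncomputable def summandBasis : ∀ idx : SummandIndex, Fin (summandDim idx) → DAlg 𝕜 ξ ν
  | .inl ℓ => pBasis ξ ν (ξ ^ ℓ.val)
  | .inr (q, s) => vBasis ξ ν (ξ ^ q.1.1.val) (ξ ^ q.1.2.val) s

lemma pOn_pBasis (hξ : ξ ^ 2 = -1) (hν : ν ^ 2 = 2) (h2 : (2 : 𝕜) ≠ 0) (ℓ : ZMod 4) :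
    POn (Algebra.lmul 𝕜 (DAlg 𝕜 ξ ν)) ℓ (pBasis ξ ν (ξ ^ ℓ.val)) := by
  have hl4 := pow_pow_four_eq_one hξ ℓ.val
  exact pOn_of_isWeightVector hξ hν h2
    (isWeightVector_weightIdem hl4 (by rw [← pow_mul, mul_comm, pow_mul, hl4, one_pow]))

lemma isWeightVector_vGenerator {l m : 𝕜} (hξ : ξ ^ 2 = -1) (h2 : (2 : 𝕜) ≠ 0)
    (hl : l ^ 4 = 1) (hm : m ^ 4 = 1) (s : Fin 2) :
    IsWeightVector (Algebra.lmul 𝕜 (DAlg 𝕜 ξ ν)) (-(ξ * l)) (-m) (vGenerator ξ ν l m s) := by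
  have hl₀ : l ≠ 0 := by rintro rfl; simp at hl
  have hξ₀ : ξ ≠ 0 := by rintro rfl; simp at hξ
  have hl' : (-(ξ * l)) ^ 4 = 1 := by grind
  have hm' : (-m) ^ 4 = 1 := by grind
  match s with
  | 0 => exact (isWeightVector_weightIdem hl hm).apply_gY hξ h2 hl₀
  | 1 =>
    exact (isWeightVector_weightIdem hl' hm').apply_gYKerProj hξ h2
      (neg_ne_zero.mpr (mul_ne_zero hξ₀ hl₀))

lemma gY_mul_vGenerator {l m : 𝕜} (hξ : ξ ^ 2 = -1) (hν : ν ^ 2 = 2) (h2 : (2 : 𝕜) ≠ 0)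
    (hl : l ^ 4 = 1) (hm : m ^ 4 = 1) (hlm : m ≠ l ^ 2) (s : Fin 2) :
    gY 𝕜 ξ ν (-(ξ * l)) (-m) * vGenerator ξ ν l m s = 0 := by
  have hl' : (-(ξ * l)) ^ 4 = 1 := by grind
  have hm' : (-m) ^ 4 = 1 := by grind
  match s with
  | 0 => exact (isWeightVector_weightIdem hl hm).gY_gY_apply hξ hν h2 hl
  | 1 =>
    have hlm' : -m ≠ (-(ξ * l)) ^ 2 := by grind
    exact (isWeightVector_weightIdem hl' hm').gY_gYKerProj_apply hξ hν h2 hl' hlm'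

lemma vijOn_vBasis (hξ : ξ ^ 2 = -1) (hν : ν ^ 2 = 2) (h2 : (2 : 𝕜) ≠ 0) {i j : ZMod 4}
    (hij : ξ ^ j.val ≠ (ξ ^ i.val) ^ 2) (s : Fin 2) :
    VijOn (Algebra.lmul 𝕜 (DAlg 𝕜 ξ ν)) i j (vBasis ξ ν (ξ ^ i.val) (ξ ^ j.val) s 0)
      (vBasis ξ ν (ξ ^ i.val) (ξ ^ j.val) s 1) := by
  have hl4 := pow_pow_four_eq_one hξ i.val
  have hm4 := pow_pow_four_eq_one hξ j.val
  exact vijOn_of_isWeightVector hξ h2 (isWeightVector_vGenerator hξ h2 hl4 hm4 s)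
    (gY_mul_vGenerator hξ hν h2 hl4 hm4 hij s)

lemma weightIdem_eq_vGenerator_add_smul_vBasis (l m : 𝕜) :
    weightIdem 𝕜 ξ ν (-(ξ * l)) (-m) = vGenerator ξ ν l m 1 +
      (ν * ξ * ((-(ξ * l))⁻¹ - -m * -(ξ * l)))⁻¹ • vBasis ξ ν (-(ξ * l)) (-m) 0 0 := by
  simp [vBasis, vGenerator, gYKerProj, sub_mul, mul_assoc]

lemma weightIdem_mem_iSup_span_summandBasis (hξ : IsPrimitiveRoot ξ 4) (i j : ZMod 4) :
    weightIdem 𝕜 ξ ν (ξ ^ i.val) (ξ ^ j.val) ∈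
      ⨆ idx, Submodule.span 𝕜 (Set.range (summandBasis ξ ν idx)) := by
  have hmem (idx : SummandIndex) (k : Fin (summandDim idx)) : summandBasis ξ ν idx k ∈
      ⨆ idx, Submodule.span 𝕜 (Set.range (summandBasis ξ ν idx)) :=
    Submodule.mem_iSup_of_mem idx (Submodule.subset_span ⟨k, rfl⟩)
  have hξ₂ := sq_eq_neg_one_of_isPrimitiveRoot hξ
  by_cases hij : 2 * i = j
  · rw [← hij, two_mul, pow_val_add hξ.pow_eq_one, ← sq]
    exact hmem (.inl i) (0 : Fin 4)
  · have hl : ξ ^ i.val = -(ξ * ξ ^ (i + 1).val) := by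
      rw [pow_val_add hξ.pow_eq_one, show (1 : ZMod 4).val = 1 from rfl]
      linear_combination ξ ^ i.val * hξ₂
    have hm : ξ ^ j.val = -ξ ^ (j + 2).val := by
      rw [pow_val_add hξ.pow_eq_one, show (2 : ZMod 4).val = 2 from rfl, hξ₂]
      ring
    have hij' : 2 * (i + 1) ≠ j + 2 := fun h => hij (by linear_combination h)
    have hsplit := weightIdem_eq_vGenerator_add_smul_vBasis (ξ := ξ) (ν := ν)
      (ξ ^ (i + 1).val) (ξ ^ (j + 2).val)
    rw [← hl, ← hm] at hsplit
    rw [hsplit]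
    exact add_mem (hmem (.inr (⟨(i + 1, j + 2), hij'⟩, 1)) (1 : Fin 2))
      (Submodule.smul_mem _ _ (hmem (.inr (⟨(i, j), hij⟩, 0)) (0 : Fin 2)))

lemma mul_mem_span_summandBasis (hξ : IsPrimitiveRoot ξ 4) (hν : ν ^ 2 = 2) (idx : SummandIndex)
    (z w : DAlg 𝕜 ξ ν) (hw : w ∈ Submodule.span 𝕜 (Set.range (summandBasis ξ ν idx))) :
    z * w ∈ Submodule.span 𝕜 (Set.range (summandBasis ξ ν idx)) := by
  have hξ₂ := sq_eq_neg_one_of_isPrimitiveRoot hξ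
  have h2 := two_ne_zero_of_isPrimitiveRoot hξ
  match idx with
  | .inl ℓ => exact (pOn_pBasis hξ₂ hν h2 ℓ).dInvariant_span_range z w hw
  | .inr (q, s) =>
    have hij := pow_val_ne_sq_of_two_mul_ne hξ q.2
    exact (vijOn_vBasis hξ₂ hν h2 hij s).dInvariant_span_range z w hw

lemma iSup_span_summandBasis (hξ : IsPrimitiveRoot ξ 4) (hν : ν ^ 2 = 2) :
    ⨆ idx, Submodule.span 𝕜 (Set.range (summandBasis ξ ν idx)) = ⊤ := by
  refine eq_top_iff.mpr fun z _ => ?_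
  have hideal (w) (hw : w ∈ ⨆ idx, Submodule.span 𝕜 (Set.range (summandBasis ξ ν idx))) :
      z * w ∈ ⨆ idx, Submodule.span 𝕜 (Set.range (summandBasis ξ ν idx)) := by
    induction hw using Submodule.iSup_induction' with
    | mem idx w hw =>
      exact Submodule.mem_iSup_of_mem idx (mul_mem_span_summandBasis hξ hν idx z w hw)
    | zero => simp
    | add w w' _ _ hw hw' => rw [mul_add]; exact add_mem hw hw'
  rw [← mul_one z, ← sum_weightIdem hξ]
  exact hideal _ (sum_mem fun p _ => weightIdem_mem_iSup_span_summandBasis hξ p.1 p.2)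

lemma span_range_summandBasis_eq_top (hξ : IsPrimitiveRoot ξ 4) (hν : ν ^ 2 = 2) :
    Submodule.span 𝕜 (Set.range fun p : Σ idx, Fin (summandDim idx) =>
      summandBasis ξ ν p.1 p.2) = ⊤ := by
  rw [Set.range_sigma_eq_iUnion_range, Submodule.span_iUnion, iSup_span_summandBasis hξ hν]

lemma card_sigma_fin_summandDim : Fintype.card (Σ idx, Fin (summandDim idx)) = 64 := by
  rw [Fintype.card_sigma]
  simp only [Fintype.card_fin]
  rfl

lemma finrank_dAlg (hξ : IsPrimitiveRoot ξ 4) (hν : ν ^ 2 = 2) :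
    Module.finrank 𝕜 (DAlg 𝕜 ξ ν) = 64 := by
  have hspan := span_range_summandBasis_eq_top (ν := ν) hξ hν
  have : Module.Finite 𝕜 (DAlg 𝕜 ξ ν) :=
    ⟨Submodule.fg_def.mpr ⟨_, Set.finite_range _, hspan⟩⟩
  refine le_antisymm ?_ (le_finrank_dAlg hξ hν)
  exact (finrank_le_of_span_eq_top hspan).trans_eq card_sigma_fin_summandDim

lemma linearIndependent_summandBasis (hξ : IsPrimitiveRoot ξ 4) (hν : ν ^ 2 = 2) :
    LinearIndependent 𝕜 fun p : Σ idx, Fin (summandDim idx) => summandBasis ξ ν p.1 p.2 :=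
  linearIndependent_of_top_le_span_of_card_eq_finrank (span_range_summandBasis_eq_top hξ hν).ge
    (card_sigma_fin_summandDim.trans (finrank_dAlg hξ hν).symm)

end Summands

theorem stmt_13_general (𝕜 : Type) [Field 𝕜] (ξ ν : 𝕜) (hξ : IsPrimitiveRoot ξ 4)
    (hν : ν ^ 2 = 2) :
    Module.finrank 𝕜 (DAlg 𝕜 ξ ν) = 64 ∧
    ∃ f : (ZMod 4 ⊕ {p : ZMod 4 × ZMod 4 // 2 * p.1 ≠ p.2} × Fin 2) →
        Submodule 𝕜 (DAlg 𝕜 ξ ν),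
      DirectSum.IsInternal f ∧
      (∀ idx, ∀ z w : DAlg 𝕜 ξ ν, w ∈ f idx → z * w ∈ f idx) ∧
      (∀ ℓ : ZMod 4, ∃ p : Fin 4 → DAlg 𝕜 ξ ν, LinearIndependent 𝕜 p ∧
        f (Sum.inl ℓ) = Submodule.span 𝕜 (Set.range p) ∧
        POn (Algebra.lmul 𝕜 (DAlg 𝕜 ξ ν)) ℓ p) ∧
      (∀ (q : {p : ZMod 4 × ZMod 4 // 2 * p.1 ≠ p.2}) (s : Fin 2),
        ∃ e : Fin 2 → DAlg 𝕜 ξ ν, LinearIndependent 𝕜 e ∧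
          f (Sum.inr (q, s)) = Submodule.span 𝕜 (Set.range e) ∧
          VijOn (Algebra.lmul 𝕜 (DAlg 𝕜 ξ ν)) q.1.1 q.1.2 (e 0) (e 1)) := by
  have hξ₂ := sq_eq_neg_one_of_isPrimitiveRoot hξ
  have h2 := two_ne_zero_of_isPrimitiveRoot hξ
  have hind := linearIndependent_summandBasis hξ hν
  have hind_summand (idx : SummandIndex) : LinearIndependent 𝕜 (summandBasis ξ ν idx) :=
    hind.comp (Sigma.mk idx) sigma_mk_injective
  refine ⟨finrank_dAlg hξ hν, fun idx => Submodule.span 𝕜 (Set.range (summandBasis ξ ν idx)),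
    DirectSum.isInternal_submodule_of_iSupIndep_of_iSup_eq_top
      (iSupIndep_span_range_of_linearIndependent_sigma hind) (iSup_span_summandBasis hξ hν),
    mul_mem_span_summandBasis hξ hν, fun ℓ => ?_, fun q s => ?_⟩
  · exact ⟨pBasis ξ ν (ξ ^ ℓ.val), hind_summand (.inl ℓ), rfl, pOn_pBasis hξ₂ hν h2 ℓ⟩
  · exact ⟨vBasis ξ ν (ξ ^ q.1.1.val) (ξ ^ q.1.2.val) s, hind_summand (.inr (q, s)), rfl,
      vijOn_vBasis hξ₂ hν h2 (pow_val_ne_sq_of_two_mul_ne hξ q.2) s⟩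

/-- As a left module over itself, `D` decomposes as
`D ≅ ⨁_{ℓ ∈ ℤ/4} P(ℓ) ⊕ ⨁_{(i,j) ∈ Λ} (V_{i,j} ⊕ V_{i,j})`; in particular `D` has
`𝕜`-dimension 64. The regular representation is `Algebra.lmul`, i.e. left
multiplication. -/
theorem stmt_13 (𝕜 : Type) [Field 𝕜] [IsAlgClosed 𝕜] [CharZero 𝕜]
    (ξ ν : 𝕜) (hξ : IsPrimitiveRoot ξ 4) (hν : ν ^ 2 = 2) :
    Module.finrank 𝕜 (DAlg 𝕜 ξ ν) = 64 ∧
    ∃ f : (ZMod 4 ⊕ {p : ZMod 4 × ZMod 4 // 2 * p.1 ≠ p.2} × Fin 2) →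
        Submodule 𝕜 (DAlg 𝕜 ξ ν),
      -- the summands decompose `D` as an internal direct sum of left ideals
      DirectSum.IsInternal f ∧
      (∀ idx, ∀ z w : DAlg 𝕜 ξ ν, w ∈ f idx → z * w ∈ f idx) ∧
      -- the summand indexed by `ℓ ∈ ℤ/4` is isomorphic to `P(ℓ)`
      (∀ ℓ : ZMod 4, ∃ p : Fin 4 → DAlg 𝕜 ξ ν, LinearIndependent 𝕜 p ∧
        f (Sum.inl ℓ) = Submodule.span 𝕜 (Set.range p) ∧
        POn (Algebra.lmul 𝕜 (DAlg 𝕜 ξ ν)) ℓ p) ∧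
      -- the two summands indexed by `(i,j) ∈ Λ` are isomorphic to `V_{i,j}`
      (∀ (q : {p : ZMod 4 × ZMod 4 // 2 * p.1 ≠ p.2}) (s : Fin 2),
        ∃ e : Fin 2 → DAlg 𝕜 ξ ν, LinearIndependent 𝕜 e ∧
          f (Sum.inr (q, s)) = Submodule.span 𝕜 (Set.range e) ∧
          VijOn (Algebra.lmul 𝕜 (DAlg 𝕜 ξ ν)) q.1.1 q.1.2 (e 0) (e 1)) :=
  stmt_13_general 𝕜 ξ ν hξ hν
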